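/- arXiv:2108.00736 — 2 statements merged into one kernel-verified Lean document; each statement's English description precedes it below -/
import Mathlib

section
/- Irreducibility of the Wigner representation in orbit form: for every ℓ with 2ℓ ∈ ℕ and every nonzero v ∈ ℂ^{2ℓ+1}, the complex linear span of the orbit O^ℓ(v) = {D^ℓ(g) v : g ∈ SU(2)} is all of ℂ^{2ℓ+1}. -/
open scoped ComplexConjugate Matrix
open MeasureTheory Complex

noncomputable section

/-- `SU(2)` realized as the subgroup of the `2 × 2` complex unitary group consisting of the
matrices of determinant one; its elements are exactly the matrices
`h(α,β) = !![α, -conj β; β, conj α]` with `|α|² + |β|² = 1`. -/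
def SU2 : Subgroup (Matrix.unitaryGroup (Fin 2) ℂ) where
  carrier := {A | (A : Matrix (Fin 2) (Fin 2) ℂ).det = 1}
  mul_mem' := by
    intro A B hA hB
    simp only [Set.mem_setOf_eq] at *
    simp [Matrix.UnitaryGroup.mul_val, Matrix.det_mul, hA, hB]
  one_mem' := by simp [Set.mem_setOf_eq]
  inv_mem' := by
    intro A hA
    simp only [Set.mem_setOf_eq] at *
    simp [Matrix.UnitaryGroup.inv_val, Matrix.star_eq_conjTranspose, Matrix.det_conjTranspose, hA]

instance : MeasurableSpace SU2 := borel SU2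
instance : BorelSpace SU2 := ⟨rfl⟩

/-- The matrix `h(α,β)`. -/
def h (a b : ℂ) : Matrix (Fin 2) (Fin 2) ℂ := !![a, -conj b; b, conj a]

/-- The entry `α` of an element `g = h(α,β)` of `SU(2)`. -/
def ga (g : SU2) : ℂ := g.1.1 0 0

/-- The entry `β` of an element `g = h(α,β)` of `SU(2)`. -/
def gb (g : SU2) : ℂ := g.1.1 1 0

/-- `IsWigner n D` states that `D` is the family of Wigner functions `D^ℓ_{m,s}` for `ℓ = n/2`,
where the row index `j` corresponds to `m = j - ℓ` and the column index `k` to `s = k - ℓ`: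
for every `g = h(α,β) ∈ SU(2)` and all `z₀ z₁ : ℂ`,
`∑ⱼ √(binom n j) z₀^j z₁^(n-j) D j k g = √(binom n k) (conj α z₀ + conj β z₁)^k (-β z₀ + α z₁)^(n-k)`. -/
def IsWigner (n : ℕ) (D : Fin (n + 1) → Fin (n + 1) → SU2 → ℂ) : Prop :=
  ∀ (g : SU2) (k : Fin (n + 1)) (z₀ z₁ : ℂ),
    ∑ j : Fin (n + 1),
        (Real.sqrt (n.choose (j : ℕ)) : ℂ) * z₀ ^ (j : ℕ) * z₁ ^ (n - (j : ℕ)) * D j k g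
      = (Real.sqrt (n.choose (k : ℕ)) : ℂ) * (conj (ga g) * z₀ + conj (gb g) * z₁) ^ (k : ℕ)
          * (-(gb g) * z₀ + ga g * z₁) ^ (n - (k : ℕ))

/-- The action of the Wigner matrix `D^ℓ(g)` on a vector `v ∈ ℂ^{2ℓ+1}`. -/
def DVec {n : ℕ} (D : Fin (n + 1) → Fin (n + 1) → SU2 → ℂ) (g : SU2)
    (v : Fin (n + 1) → ℂ) : Fin (n + 1) → ℂ :=
  fun j => ∑ k, D j k g * v k

/-- The Hermitian inner product `⟨v,w⟩ = ∑ₖ conj (v k) * (w k)` on `ℂ^N`. -/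
def herm {N : ℕ} (v w : Fin N → ℂ) : ℂ := ∑ r, conj (v r) * w r

lemma exists_SU2 (a b : ℂ) (hab : a * conj a + b * conj b = 1) :
    ∃ g : SU2, ga g = a ∧ gb g = b := by
  have hu : h a b ∈ Matrix.unitaryGroup (Fin 2) ℂ := by
    rw [Matrix.mem_unitaryGroup_iff]
    ext i j
    fin_cases i <;> fin_cases j <;>
      simp [h, Matrix.mul_apply, Fin.sum_univ_two, Matrix.star_apply] <;>
      first | ring1 | linear_combination hab
  refine ⟨⟨⟨h a b, hu⟩, ?_⟩, rfl, rfl⟩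
  change (h a b).det = 1
  simp [h, Matrix.det_fin_two]
  linear_combination hab

open Polynomial in
lemma coeff_of_eval {n : ℕ} (x : Fin (n + 1) → ℂ) (P : ℂ[X])
    (H : ∀ z : ℂ, ∑ j, x j * z ^ (j : ℕ) = P.eval z) (j : Fin (n + 1)) :
    x j = P.coeff j := by
  have : P = ∑ j : Fin (n + 1), C (x j) * X ^ (j : ℕ) := by
    apply Polynomial.funext
    intro z
    rw [← H z]
    simp [Polynomial.eval_finset_sum]
  rw [this]
  simp [Polynomial.finset_sum_coeff, Polynomial.coeff_X_pow, Fin.val_inj]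

lemma coeff_unique {n : ℕ} (x y : Fin (n + 1) → ℂ)
    (H : ∀ z : ℂ, ∑ j, x j * z ^ (j : ℕ) = ∑ j, y j * z ^ (j : ℕ)) (j : Fin (n + 1)) :
    x j = y j := by
  rw [coeff_of_eval x (∑ j : Fin (n + 1), Polynomial.C (y j) * Polynomial.X ^ (j : ℕ)) _ j]
  · simp [Polynomial.finset_sum_coeff, Polynomial.coeff_X_pow, Fin.val_inj]
  · intro z
    rw [H z]
    simp [Polynomial.eval_finset_sum]

lemma sqrt_choose_ne {n : ℕ} (j : Fin (n + 1)) : (Real.sqrt (n.choose (j : ℕ)) : ℂ) ≠ 0 := by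
  have : 0 < n.choose (j : ℕ) := Nat.choose_pos (by omega)
  have h2 : 0 < Real.sqrt (n.choose (j : ℕ)) := Real.sqrt_pos.mpr (by exact_mod_cast this)
  exact_mod_cast h2.ne'

lemma unit_conj {p : ℂ} (hp : ‖p‖ = 1) : p * conj p = 1 := by
  rw [Complex.mul_conj, Complex.normSq_eq_norm_sq, hp]; simp

lemma torus {n : ℕ} {D : Fin (n + 1) → Fin (n + 1) → SU2 → ℂ} (hD : IsWigner n D)
    (g g' : SU2) (p q : ℂ) (hp : ‖p‖ = 1) (hq : ‖q‖ = 1)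
    (h1 : ga g' = p * ga g) (h2 : gb g' = q * gb g) (j k : Fin (n + 1)) :
    D j k g' * (p ^ n * q ^ n)
      = D j k g * (p ^ (2 * n - k - j : ℕ) * q ^ (n + j - k : ℕ)) := by
  have hp' := unit_conj hp
  have hq' := unit_conj hq
  have hp0 : p ≠ 0 := by rintro rfl; simp at hp
  have hq0 : q ≠ 0 := by rintro rfl; simp at hq
  have hk : (k : ℕ) ≤ n := by omega
  have hj : (j : ℕ) ≤ n := by omega
  have key := coeff_unique
    (fun j : Fin (n + 1) => (Real.sqrt (n.choose (j : ℕ)) : ℂ) * D j k g' *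
      (p ^ (j : ℕ) * p ^ (k : ℕ) * q ^ (k : ℕ)))
    (fun j : Fin (n + 1) => (Real.sqrt (n.choose (j : ℕ)) : ℂ) * D j k g * (p ^ n * q ^ (j : ℕ)))
    (by
      intro z
      have e1 := hD g' k (p * z) 1
      have e2 := hD g k (q * z) 1
      have l1 : ∑ j : Fin (n + 1), (Real.sqrt (n.choose (j : ℕ)) : ℂ) * D j k g' *
          (p ^ (j : ℕ) * p ^ (k : ℕ) * q ^ (k : ℕ)) * z ^ (j : ℕ) = p ^ (k : ℕ) * q ^ (k : ℕ) *
          ∑ j : Fin (n + 1), (Real.sqrt (n.choose (j : ℕ)) : ℂ) * (p * z) ^ (j : ℕ) *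
            1 ^ (n - (j : ℕ)) * D j k g' := by
        rw [Finset.mul_sum]
        refine Finset.sum_congr rfl fun i _ => ?_
        rw [one_pow, mul_pow]; ring
      have l2 : ∑ j : Fin (n + 1), (Real.sqrt (n.choose (j : ℕ)) : ℂ) * D j k g *
          (p ^ n * q ^ (j : ℕ)) * z ^ (j : ℕ) = p ^ n *
          ∑ j : Fin (n + 1), (Real.sqrt (n.choose (j : ℕ)) : ℂ) * (q * z) ^ (j : ℕ) *
            1 ^ (n - (j : ℕ)) * D j k g := by
        rw [Finset.mul_sum]
        refine Finset.sum_congr rfl fun i _ => ?_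
        rw [one_pow, mul_pow]; ring
      rw [l1, l2, e1, e2, h1, h2]
      have s1 : p * q * (conj (p * ga g) * (p * z) + conj (q * gb g) * 1)
          = p * (conj (ga g) * (q * z) + conj (gb g) * 1) := by
        simp only [map_mul]
        linear_combination p * q * z * conj (ga g) * hp' + p * conj (gb g) * hq'
      have s2 : -(q * gb g) * (p * z) + p * ga g * 1 = p * (-(gb g) * (q * z) + ga g * 1) := by
        ring
      rw [s2, mul_pow p]
      have s3 : p ^ n = p ^ (k : ℕ) * p ^ (n - k : ℕ) := by rw [← pow_add]; congr 1; omega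
      rw [s3]
      have s4 := congrArg (· ^ (k : ℕ)) s1
      simp only [mul_pow] at s4
      simp only [map_mul] at s4 ⊢
      linear_combination (Real.sqrt (n.choose (k : ℕ)) : ℂ) * p ^ (n - k : ℕ) *
        (-(gb g) * (q * z) + ga g * 1) ^ (n - k : ℕ) * s4) j
  have key2 : D j k g' * (p ^ (j : ℕ) * p ^ (k : ℕ) * q ^ (k : ℕ))
      = D j k g * (p ^ n * q ^ (j : ℕ)) := by
    apply mul_left_cancel₀ (sqrt_choose_ne j)
    linear_combination key
  have hne : p ^ (j : ℕ) * p ^ (k : ℕ) * q ^ (k : ℕ) ≠ 0 := by positivity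
  apply mul_right_cancel₀ hne
  have t1 : p ^ (2 * n - k - j : ℕ) * (p ^ (j : ℕ) * p ^ (k : ℕ)) = p ^ n * p ^ n := by
    rw [← pow_add, ← pow_add, ← pow_add]; congr 1; omega
  have t2 : q ^ (n + j - k : ℕ) * q ^ (k : ℕ) = q ^ n * q ^ (j : ℕ) := by
    rw [← pow_add, ← pow_add]; congr 1; omega
  calc _ = p ^ n * q ^ n * (D j k g * (p ^ n * q ^ (j : ℕ))) := by rw [← key2]; ring
    _ = D j k g * (p ^ n * p ^ n) * (q ^ n * q ^ (j : ℕ)) := by ring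
    _ = _ := by rw [← t1, ← t2]; ring

lemma unit_infinite : {z : ℂ | ‖z‖ = 1}.Infinite := by
  have h1 : IsPreconnected (Metric.sphere (0 : ℂ) 1) :=
    isPreconnected_sphere (by simp [Complex.rank_real_complex]) 0 1
  have h2 : (Metric.sphere (0 : ℂ) 1).Infinite := by
    refine h1.infinite_of_nontrivial ⟨1, by simp, -1, by simp, ?_⟩
    intro h; norm_num [Complex.ext_iff] at h
  refine h2.mono ?_
  intro z hz
  simpa using hz

open Polynomial in
lemma coeff_zero_of_unit {ι : Type*} [Fintype ι] (e : ι → ℕ) (he : Function.Injective e)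
    (x : ι → ℂ) (H : ∀ p : ℂ, ‖p‖ = 1 → ∑ i, x i * p ^ e i = 0) (i : ι) : x i = 0 := by
  have h0 : (∑ i, C (x i) * X ^ e i : ℂ[X]) = 0 := by
    apply Polynomial.eq_zero_of_infinite_isRoot
    refine unit_infinite.mono ?_
    intro p hp
    simpa [Polynomial.IsRoot, Polynomial.eval_finset_sum] using H p hp
  have h1 := congrArg (fun P => coeff P (e i)) h0
  classical
  simpa [Polynomial.finset_sum_coeff, Polynomial.coeff_X_pow, he.eq_iff] using h1

open Polynomial in
lemma exists_real_t (n : ℕ) (j k : Fin (n + 1)) :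
    ∃ t : ℝ, ((X + C (t : ℂ)) ^ (k : ℕ) * (1 - C (t : ℂ) * X) ^ (n - k : ℕ)).coeff (j : ℕ) ≠ 0 := by
  by_contra hcon
  push Not at hcon
  let R : ℂ[X][X] := (X + C X) ^ (k : ℕ) * (1 - C X * X) ^ (n - k : ℕ)
  have hR : ∀ s : ℂ, (R.coeff j).eval s
      = ((X + C s) ^ (k : ℕ) * (1 - C s * X) ^ (n - k : ℕ)).coeff (j : ℕ) := by
    intro s
    have : (X + C s) ^ (k : ℕ) * (1 - C s * X) ^ (n - k : ℕ) = R.map (evalRingHom s) := by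
      simp [R]
    rw [this, Polynomial.coeff_map]; rfl
  have h0 : R.coeff j = 0 := by
    apply Polynomial.eq_zero_of_infinite_isRoot
    refine (Set.infinite_range_of_injective Complex.ofReal_injective).mono ?_
    rintro _ ⟨t, rfl⟩
    change (R.coeff j).eval _ = 0
    rw [hR, hcon]
  have h1 := hR I
  have h2 : (1 - C I * X : ℂ[X]) = C (-I) * (X + C I) := by
    have : (C I * C I : ℂ[X]) = -1 := by rw [← C_mul, I_mul_I]; simp
    rw [C_neg]
    linear_combination this
  rw [h0, h2, mul_pow, mul_left_comm, ← pow_add, ← C_pow, coeff_C_mul, coeff_X_add_C_pow,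
    show (k : ℕ) + (n - k) = n by omega] at h1
  have h3 : n.choose (j : ℕ) ≠ 0 := (Nat.choose_pos (by omega)).ne'
  simp [h3] at h1

open Polynomial in
lemma exists_D_ne {n : ℕ} {D : Fin (n + 1) → Fin (n + 1) → SU2 → ℂ} (hD : IsWigner n D)
    (j k : Fin (n + 1)) : ∃ g : SU2, D j k g ≠ 0 := by
  obtain ⟨t, ht⟩ := exists_real_t n j k
  have hpos : 0 < 1 + t ^ 2 := by positivity
  set a : ℝ := (Real.sqrt (1 + t ^ 2))⁻¹ with ha
  have ha0 : (a : ℂ) ≠ 0 := by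
    have : 0 < a := by positivity
    exact_mod_cast this.ne'
  have ha2 : a * a + (a * t) * (a * t) = 1 := by
    have : a ^ 2 = (1 + t ^ 2)⁻¹ := by rw [ha, inv_pow, Real.sq_sqrt hpos.le]
    have h3 : a ^ 2 * (1 + t ^ 2) = 1 := by rw [this]; field_simp
    linear_combination h3
  obtain ⟨g, h1, h2⟩ := exists_SU2 (a : ℂ) ((a * t : ℝ) : ℂ) (by
    rw [Complex.conj_ofReal, Complex.conj_ofReal]; exact_mod_cast ha2)
  refine ⟨g, fun h0 => ht ?_⟩
  have key := coeff_of_eval (fun j : Fin (n + 1) => (Real.sqrt (n.choose (j : ℕ)) : ℂ) * D j k g)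
    (C ((Real.sqrt (n.choose (k : ℕ)) : ℂ) * a ^ n) *
      ((X + C (t : ℂ)) ^ (k : ℕ) * (1 - C (t : ℂ) * X) ^ (n - k : ℕ))) (by
    intro z
    have e := hD g k z 1
    rw [h1, h2, Complex.conj_ofReal, Complex.conj_ofReal] at e
    have s1 : (a : ℂ) * z + ((a * t : ℝ) : ℂ) * 1 = a * (z + t) := by push_cast; ring
    have s2 : -((a * t : ℝ) : ℂ) * z + (a : ℂ) * 1 = a * (1 - t * z) := by push_cast; ring
    have s3 : (a : ℂ) ^ n = a ^ (k : ℕ) * a ^ (n - k : ℕ) := by rw [← pow_add]; congr 1; omega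
    rw [s1, s2, mul_pow, mul_pow] at e
    simp only [eval_mul, eval_C, eval_pow, eval_add, eval_sub, eval_X, eval_one]
    rw [s3]
    refine Eq.trans (Finset.sum_congr rfl fun i _ => ?_) (e.trans ?_)
    · rw [one_pow]; ring
    · ring) j
  simp only [h0, mul_zero, coeff_C_mul] at key
  have hne : (Real.sqrt (n.choose (k : ℕ)) : ℂ) * a ^ n ≠ 0 :=
    mul_ne_zero (sqrt_choose_ne k) (pow_ne_zero _ ha0)
  exact (mul_eq_zero.mp key.symm).resolve_left hne

lemma exists_torus (g : SU2) (p q : ℂ) (hp : ‖p‖ = 1) (hq : ‖q‖ = 1) :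
    ∃ g' : SU2, ga g' = p * ga g ∧ gb g' = q * gb g := by
  apply exists_SU2
  have hp' := unit_conj hp
  have hq' := unit_conj hq
  have hg : ga g * conj (ga g) + gb g * conj (gb g) = 1 := by
    have := Matrix.mem_unitaryGroup_iff'.mp g.1.2
    have h1 := congrFun (congrFun this 0) 0
    simp [Matrix.mul_apply, Fin.sum_univ_two, Matrix.star_apply] at h1
    rw [← h1]
    simp only [ga, gb]
    ring
  simp only [map_mul]
  linear_combination hg + ga g * conj (ga g) * hp' + gb g * conj (gb g) * hq'

/-- irreducibility in orbit form: for every nonzero `v ∈ ℂ^{2ℓ+1}` the span of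
the orbit `{D^ℓ(g) v : g ∈ SU(2)}` is all of `ℂ^{2ℓ+1}`. -/
theorem wigner_orbit_spans (n : ℕ) (D : Fin (n + 1) → Fin (n + 1) → SU2 → ℂ)
    (hD : IsWigner n D) (v : Fin (n + 1) → ℂ) (hv : v ≠ 0) :
    Submodule.span ℂ {w : Fin (n + 1) → ℂ | ∃ g : SU2, w = DVec D g v} = ⊤ := by
  by_contra hne
  obtain ⟨f, hf0, hf⟩ := Submodule.exists_le_ker_of_lt_top _ (lt_top_iff_ne_top.mpr hne)
  have hF : ∀ g : SU2, f (DVec D g v) = 0 := fun g =>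
    hf (Submodule.subset_span ⟨g, rfl⟩)
  set c : Fin (n + 1) → ℂ := fun j => f (Pi.single j 1) with hc
  have hfs : ∀ w, f w = ∑ j, w j * c j := by
    intro w
    rw [LinearMap.pi_apply_eq_sum_univ f w]
    refine Finset.sum_congr rfl fun i _ => ?_
    rw [smul_eq_mul, hc]
    congr 2
    ext x
    simp [Pi.single_apply, eq_comm]
  obtain ⟨j, hj⟩ : ∃ j, c j ≠ 0 := by
    by_contra hcon
    push Not at hcon
    apply hf0
    apply LinearMap.ext
    intro w
    rw [hfs]
    simp [hcon]
  obtain ⟨k, hk⟩ := Function.ne_iff.mp hv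
  obtain ⟨g, hg⟩ := exists_D_ne hD j k
  have main := coeff_zero_of_unit (ι := Fin (n + 1) × Fin (n + 1))
    (fun i => (2 * n - i.2 - i.1) + (2 * n + 1) * (n + i.1 - i.2))
    (by
      rintro ⟨a, b⟩ ⟨a', b'⟩ hab
      simp only at hab
      have r1 := congrArg (· % (2 * n + 1)) hab
      simp only [Nat.add_mul_mod_self_left] at r1
      rw [Nat.mod_eq_of_lt (by omega), Nat.mod_eq_of_lt (by omega)] at r1
      rw [r1] at hab
      have r2 := Nat.eq_of_mul_eq_mul_left (by omega) (Nat.add_left_cancel hab)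
      ext <;> simp only <;> omega)
    (fun i => D i.1 i.2 g * v i.2 * c i.1)
    (by
      intro p hp
      have hq : ‖p ^ (2 * n + 1)‖ = 1 := by rw [norm_pow, hp, one_pow]
      obtain ⟨g', h1, h2⟩ := exists_torus g p (p ^ (2 * n + 1)) hp hq
      have e := hF g'
      rw [hfs] at e
      have e2 := congrArg (· * (p ^ n * (p ^ (2 * n + 1)) ^ n)) e
      simp only [zero_mul, Finset.sum_mul, DVec] at e2
      rw [Fintype.sum_prod_type, ← e2]
      refine Finset.sum_congr rfl fun a _ => Finset.sum_congr rfl fun b _ => ?_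
      have t := torus hD g g' p _ hp hq h1 h2 a b
      simp only
      rw [pow_add, pow_mul]
      linear_combination (-(v b * c a)) * t) (j, k)
  simp only at main
  exact mul_ne_zero (mul_ne_zero hg hk) hj main
end
end

section
/- For every ℓ with 2ℓ ∈ ℕ and every pair of nonzero vectors v, w ∈ ℂ^{2ℓ+1}, the set {g ∈ SU(2) : ⟨D^ℓ(g) v, w⟩ = 0} has Haar measure zero in SU(2). -/
open scoped ComplexConjugate Matrix
open MeasureTheory Complex

noncomputable section

section helpers

lemma su2_entries (g : SU2) : (g.1.1 0 1 = -conj (gb g)) ∧ (g.1.1 1 1 = conj (ga g)) ∧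
    conj (ga g) * ga g + conj (gb g) * gb g = 1 := by
  have hdet : (g.1.1).det = 1 := g.2
  have hu : star g.1.1 * g.1.1 = 1 := (Matrix.mem_unitaryGroup_iff').1 g.1.2
  have h00 := congrFun (congrFun hu 0) 0
  have h01 := congrFun (congrFun hu 0) 1
  simp only [Matrix.mul_apply, Fin.sum_univ_two, Matrix.star_apply, Matrix.one_apply_eq, RCLike.star_def] at h00
  have h01' : conj (g.1.1 0 0) * g.1.1 0 1 + conj (g.1.1 1 0) * g.1.1 1 1 = 0 := by
    simpa [Matrix.mul_apply, Fin.sum_univ_two, Matrix.star_apply] using h01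
  rw [Matrix.det_fin_two] at hdet
  unfold ga gb
  generalize g.1.1 0 0 = a at *
  generalize g.1.1 0 1 = b at *
  generalize g.1.1 1 0 = c at *
  generalize g.1.1 1 1 = d at *
  refine ⟨?_, ?_, h00⟩
  · linear_combination (-b) * h00 + a * h01' - conj c * hdet
  · linear_combination (-d) * h00 + c * h01' + conj a * hdet

lemma ga_mul (x y : SU2) : ga (x * y) = ga x * ga y - conj (gb x) * gb y := by
  have e : ga (x * y) = x.1.1 0 0 * y.1.1 0 0 + x.1.1 0 1 * y.1.1 1 0 := by
    unfold ga
    simp [Matrix.mul_apply, Fin.sum_univ_two]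
  rw [e, (su2_entries x).1]
  unfold ga gb
  ring

lemma gb_mul (x y : SU2) : gb (x * y) = gb x * ga y + conj (ga x) * gb y := by
  have e : gb (x * y) = x.1.1 1 0 * y.1.1 0 0 + x.1.1 1 1 * y.1.1 1 0 := by
    unfold gb
    simp [Matrix.mul_apply, Fin.sum_univ_two]
  rw [e, (su2_entries x).2.1]
  unfold ga gb
  ring

lemma exists_su2 (a b : ℂ) (hab : conj a * a + conj b * b = 1) :
    ∃ g : SU2, ga g = a ∧ gb g = b := by
  refine ⟨⟨⟨!![a, -conj b; b, conj a], ?_⟩, ?_⟩, ?_, ?_⟩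
  · rw [Matrix.mem_unitaryGroup_iff']
    ext i j
    fin_cases i <;> fin_cases j <;>
      simp [Matrix.mul_apply, Fin.sum_univ_two, Matrix.star_apply]
    · linear_combination hab
    · ring
    · ring
    · linear_combination hab
  · change Matrix.det _ = 1
    simp [Matrix.det_fin_two]
    linear_combination hab
  · simp [ga]
  · simp [gb]

lemma continuous_ga : Continuous ga := by
  unfold ga
  have : Continuous fun g : SU2 => (g.1.1 : Matrix (Fin 2) (Fin 2) ℂ) :=
    continuous_subtype_val.comp continuous_subtype_val
  exact this.matrix_elem 0 0

lemma continuous_gb : Continuous gb := by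
  unfold gb
  have : Continuous fun g : SU2 => (g.1.1 : Matrix (Fin 2) (Fin 2) ℂ) :=
    continuous_subtype_val.comp continuous_subtype_val
  exact this.matrix_elem 1 0

/-- recurrence lemma -/
lemma le_measure_recur (μ : Measure SU2) [μ.IsHaarMeasure] [IsProbabilityMeasure μ]
    (Z : Set SU2) (hZ : MeasurableSet Z) (x : ℕ → SU2) :
    μ Z ≤ μ {g | {i | x i * g ∈ Z}.Infinite} := by
  have hA : ∀ i, MeasurableSet ((fun g => x i * g) ⁻¹' Z) := fun i =>
    (continuous_const_mul (x i)).measurable hZ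
  have hm : ∀ i, μ ((fun g => x i * g) ⁻¹' Z) = μ Z := fun i => measure_preimage_mul μ (x i) Z
  set B : ℕ → Set SU2 := fun m => ⋃ i, ⋃ (_ : m ≤ i), ((fun g => x i * g) ⁻¹' Z) with hB
  have hBm : ∀ m, MeasurableSet (B m) := fun m =>
    MeasurableSet.iUnion fun i => MeasurableSet.iUnion fun _ => hA i
  have hanti : Antitone B := by
    intro m k hmk g hg
    simp only [hB, Set.mem_iUnion] at hg ⊢
    obtain ⟨i, hi, hg⟩ := hg
    exact ⟨i, hmk.trans hi, hg⟩
  have ht := tendsto_measure_iInter_atTop (μ := μ) (fun m => (hBm m).nullMeasurableSet) hanti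
    ⟨0, measure_ne_top μ _⟩
  have h1 : μ Z ≤ μ (⋂ m, B m) := by
    refine ge_of_tendsto' ht fun m => ?_
    rw [← hm m]
    refine measure_mono fun g hg => ?_
    simp only [hB, Set.mem_iUnion]
    exact ⟨m, le_rfl, hg⟩
  refine h1.trans (measure_mono fun g hg => ?_)
  simp only [hB, Set.mem_iInter, Set.mem_iUnion] at hg
  simp only [Set.mem_setOf_eq]
  refine Set.infinite_of_forall_exists_gt fun m => ?_
  obtain ⟨i, hi, hg⟩ := hg (m + 1)
  exact ⟨i, hg, hi⟩

/-- The polynomial attached to a vector. -/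
def PV {n : ℕ} (v : Fin (n + 1) → ℂ) (z₀ z₁ : ℂ) : ℂ :=
  ∑ j : Fin (n + 1), (Real.sqrt (n.choose (j : ℕ)) : ℂ) * z₀ ^ (j : ℕ) * z₁ ^ (n - (j : ℕ)) * v j

lemma PV_DVec {n : ℕ} {D : Fin (n + 1) → Fin (n + 1) → SU2 → ℂ} (hD : IsWigner n D) (g : SU2)
    (v : Fin (n + 1) → ℂ) (z₀ z₁ : ℂ) :
    PV (DVec D g v) z₀ z₁ =
      PV v (conj (ga g) * z₀ + conj (gb g) * z₁) (-(gb g) * z₀ + ga g * z₁) := by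
  unfold PV DVec
  simp_rw [← hD g, Finset.sum_mul, Finset.mul_sum]
  rw [Finset.sum_comm]
  refine Finset.sum_congr rfl fun k _ => Finset.sum_congr rfl fun j _ => ?_
  ring

lemma vec_zero_of_infinite {n : ℕ} (c : Fin (n + 1) → ℂ) (S : Set ℂ) (hS : S.Infinite)
    (hc : ∀ z ∈ S, ∑ j, c j * z ^ (j : ℕ) = 0) : c = 0 := by
  have hp : (∑ j : Fin (n + 1), Polynomial.monomial (j : ℕ) (c j)) = 0 := by
    refine Polynomial.eq_zero_of_infinite_isRoot _ (hS.mono fun z hz => ?_)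
    simp [Polynomial.IsRoot, Polynomial.eval_finset_sum, hc z hz]
  funext i
  have := congrArg (fun p => Polynomial.coeff p (i : ℕ)) hp
  simpa [Polynomial.finset_sum_coeff, Polynomial.coeff_monomial, Fin.val_inj] using this

lemma PV_zero_of_infinite {n : ℕ} (v : Fin (n + 1) → ℂ) (S : Set ℂ) (hS : S.Infinite)
    (hc : ∀ z ∈ S, PV v z 1 = 0) : v = 0 := by
  have := vec_zero_of_infinite (fun j => (Real.sqrt (n.choose (j : ℕ)) : ℂ) * v j) S hS (by
    intro z hz
    rw [← hc z hz]
    unfold PV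
    refine Finset.sum_congr rfl fun j _ => ?_
    simp; ring)
  funext j
  have hj := congrFun this j
  simpa [sqrt_choose_ne j] using hj

lemma PV_inj {n : ℕ} (v w : Fin (n + 1) → ℂ) (hvw : ∀ z, PV v z 1 = PV w z 1) : v = w := by
  rw [← sub_eq_zero]
  refine PV_zero_of_infinite _ Set.univ Set.infinite_univ fun z _ => ?_
  have := hvw z
  unfold PV at *
  simp [mul_sub, Finset.sum_sub_distrib]
  simpa [sub_eq_zero] using this

lemma DVec_mul {n : ℕ} {D : Fin (n + 1) → Fin (n + 1) → SU2 → ℂ} (hD : IsWigner n D) (x y : SU2)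
    (v : Fin (n + 1) → ℂ) : DVec D (x * y) v = DVec D x (DVec D y v) := by
  refine PV_inj _ _ fun z => ?_
  rw [PV_DVec hD, PV_DVec hD, PV_DVec hD, ga_mul, gb_mul]
  congr 1
  · simp; ring
  · ring

lemma herm_mul {n : ℕ} {D : Fin (n + 1) → Fin (n + 1) → SU2 → ℂ} (hD : IsWigner n D) (x y : SU2)
    (v w : Fin (n + 1) → ℂ) : herm (DVec D (x * y) v) w =
      herm (DVec D y v) (fun j => ∑ i, conj (D i j x) * w i) := by
  rw [DVec_mul hD]
  generalize DVec D y v = u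
  unfold herm DVec
  simp only [map_sum, map_mul, Finset.sum_mul, Finset.mul_sum]
  rw [Finset.sum_comm]
  refine Finset.sum_congr rfl fun k _ => Finset.sum_congr rfl fun j _ => ?_
  ring

lemma continuous_coeff_mul (p q : SU2 → Polynomial ℂ)
    (hp : ∀ j, Continuous fun g => (p g).coeff j) (hq : ∀ j, Continuous fun g => (q g).coeff j) :
    ∀ j, Continuous fun g => (p g * q g).coeff j := by
  intro j
  simp_rw [Polynomial.coeff_mul]
  exact continuous_finset_sum _ fun i _ => (hp _).mul (hq _)

lemma continuous_coeff_pow (p : SU2 → Polynomial ℂ)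
    (hp : ∀ j, Continuous fun g => (p g).coeff j) (m : ℕ) :
    ∀ j, Continuous fun g => (p g ^ m).coeff j := by
  induction m with
  | zero => intro j; simpa using continuous_const
  | succ m ih =>
    simp_rw [pow_succ]
    exact continuous_coeff_mul _ _ ih hp

lemma continuous_coeff_lin (a b : SU2 → ℂ) (ha : Continuous a) (hb : Continuous b) :
    ∀ j, Continuous fun g => (Polynomial.C (a g) * Polynomial.X + Polynomial.C (b g)).coeff j := by
  intro j
  simp only [Polynomial.coeff_add, Polynomial.coeff_C_mul, Polynomial.coeff_C]
  refine (ha.mul continuous_const).add ?_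
  split_ifs
  · exact hb
  · exact continuous_const

lemma continuous_D {n : ℕ} {D : Fin (n + 1) → Fin (n + 1) → SU2 → ℂ} (hD : IsWigner n D)
    (j k : Fin (n + 1)) : Continuous (D j k) := by
  have key : ∀ g, (∑ i : Fin (n + 1),
      Polynomial.monomial (i : ℕ) ((Real.sqrt (n.choose (i : ℕ)) : ℂ) * D i k g)) =
      Polynomial.C (Real.sqrt (n.choose (k : ℕ)) : ℂ) *
       ((Polynomial.C (conj (ga g)) * Polynomial.X + Polynomial.C (conj (gb g))) ^ (k : ℕ) *
       (Polynomial.C (-(gb g)) * Polynomial.X + Polynomial.C (ga g)) ^ (n - (k : ℕ))) := by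
    intro g
    refine Polynomial.funext fun z => ?_
    have := hD g k z 1
    simp only [Polynomial.eval_finset_sum, Polynomial.eval_monomial, Polynomial.eval_mul,
      Polynomial.eval_C, Polynomial.eval_pow, Polynomial.eval_add, Polynomial.eval_X]
    simp only [one_pow, mul_one] at this
    rw [← mul_assoc, ← this]
    refine Finset.sum_congr rfl fun i _ => ?_
    ring
  have hc : ∀ g, D j k g = (Real.sqrt (n.choose (j : ℕ)) : ℂ)⁻¹ *
      ((Real.sqrt (n.choose (k : ℕ)) : ℂ) *
       ((Polynomial.C (conj (ga g)) * Polynomial.X + Polynomial.C (conj (gb g))) ^ (k : ℕ) *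
       (Polynomial.C (-(gb g)) * Polynomial.X + Polynomial.C (ga g)) ^ (n - (k : ℕ))).coeff j) := by
    intro g
    rw [← Polynomial.coeff_C_mul, ← key g]
    simp [Polynomial.finset_sum_coeff, Polynomial.coeff_monomial, Fin.val_inj, sqrt_choose_ne j]
  rw [show D j k = _ from funext hc]
  refine continuous_const.mul (continuous_const.mul ?_)
  exact continuous_coeff_mul _ _
    (continuous_coeff_pow _ (continuous_coeff_lin _ _ (continuous_conj.comp continuous_ga)
      (continuous_conj.comp continuous_gb)) _)
    (continuous_coeff_pow _ (continuous_coeff_lin _ _ continuous_gb.neg continuous_ga) _) _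

lemma measurable_Z {n : ℕ} {D : Fin (n + 1) → Fin (n + 1) → SU2 → ℂ} (hD : IsWigner n D)
    (v w : Fin (n + 1) → ℂ) : MeasurableSet {g : SU2 | herm (DVec D g v) w = 0} := by
  have : Continuous fun g : SU2 => herm (DVec D g v) w := by
    unfold herm DVec
    refine continuous_finset_sum _ fun r _ => (continuous_conj.comp ?_).mul continuous_const
    exact continuous_finset_sum _ fun k _ => (continuous_D hD r k).mul continuous_const
  exact (isClosed_singleton.preimage this).measurableSet

/-- A sequence of angles. -/
def ang (i : ℕ) : ℝ := 1 / ((i : ℝ) + 1)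

lemma ang_cross {i j : ℕ} (hh : Real.sin (ang i) * Real.cos (ang j) -
    Real.cos (ang i) * Real.sin (ang j) = 0) : i = j := by
  rw [← Real.sin_sub] at hh
  have b : ∀ i, 0 < ang i ∧ ang i ≤ 1 := fun i => by
    unfold ang
    refine ⟨by positivity, ?_⟩
    rw [div_le_one (by positivity)]
    have : (0 : ℝ) ≤ i := by positivity
    linarith
  have := Real.pi_gt_three
  rw [Real.sin_eq_zero_iff_of_lt_of_lt (by linarith [(b i).1, (b j).2])
    (by linarith [(b i).2, (b j).1])] at hh
  unfold ang at hh
  rw [sub_eq_zero, one_div, one_div, inv_inj] at hh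
  exact_mod_cast add_right_cancel hh

lemma ang_sq (i : ℕ) : ((Real.cos (ang i) : ℝ) : ℂ) ^ 2 + ((Real.sin (ang i) : ℝ) : ℂ) ^ 2 = 1 := by
  exact_mod_cast Real.cos_sq_add_sin_sq (ang i)

lemma step3 (μ : Measure SU2) [μ.IsHaarMeasure]
    [IsProbabilityMeasure μ] {n : ℕ} {D : Fin (n + 1) → Fin (n + 1) → SU2 → ℂ}
    (hD : IsWigner n D) (v : Fin (n + 1) → ℂ) (hv : v ≠ 0) :
    μ {g : SU2 | herm (DVec D g v) (Pi.single 0 1) = 0} = 0 := by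
  have hx : ∀ i, ∃ g : SU2, ga g = (Real.cos (ang i) : ℂ) ∧ gb g = (Real.sin (ang i) : ℂ) := by
    intro i
    refine exists_su2 _ _ ?_
    rw [conj_ofReal, conj_ofReal]
    linear_combination ang_sq i
  choose x hxa hxb using hx
  have hZ : ∀ g, herm (DVec D g v) (Pi.single 0 1) = 0 → PV v (conj (gb g)) (ga g) = 0 := by
    intro g hg
    have h0 : DVec D g v 0 = 0 := by
      simpa [herm, Pi.single_apply] using hg
    have := PV_DVec hD g v 0 1
    simp only [mul_zero, mul_one, zero_add] at this
    rw [← this]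
    unfold PV
    refine Finset.sum_eq_zero fun j _ => ?_
    by_cases hj : j = 0
    · subst hj; simp [h0]
    · have : (j : ℕ) ≠ 0 := fun hh => hj (Fin.ext hh)
      simp [this]
  have hdiv : ∀ t u : ℂ, u ≠ 0 → PV v t u = 0 → PV v (t / u) 1 = 0 := by
    intro t u hu h0
    have : u ^ n * PV v (t / u) 1 = PV v t u := by
      unfold PV
      rw [Finset.mul_sum]
      refine Finset.sum_congr rfl fun j _ => ?_
      have hj : (j : ℕ) ≤ n := Nat.lt_succ_iff.1 j.2
      have e : u ^ n = u ^ (j : ℕ) * u ^ (n - (j : ℕ)) := by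
        rw [← pow_add, Nat.add_sub_cancel' hj]
      rw [e, div_pow]
      field_simp
      simp
    rw [h0] at this
    exact (mul_eq_zero.1 this).resolve_left (pow_ne_zero _ hu)
  refine le_antisymm ((le_measure_recur μ _ (measurable_Z hD _ _) x).trans ?_) zero_le
  rw [nonpos_iff_eq_zero]
  convert measure_empty (μ := μ)
  rw [Set.eq_empty_iff_forall_notMem]
  intro g hg
  simp only [Set.mem_setOf_eq] at hg
  have hcross : ∀ i j, conj (gb (x i * g)) * ga (x j * g) - conj (gb (x j * g)) * ga (x i * g) = 0 →
      i = j := by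
    intro i j hij
    refine ang_cross ?_
    rw [ga_mul, gb_mul, ga_mul, gb_mul, hxa, hxa, hxb, hxb] at hij
    simp only [map_add, map_mul, conj_ofReal] at hij
    have h1 := (su2_entries g).2.2
    have : (((Real.sin (ang i) * Real.cos (ang j) -
      Real.cos (ang i) * Real.sin (ang j) : ℝ)) : ℂ) = 0 := by
      simp only [ofReal_sub, ofReal_mul]
      linear_combination hij - ((Real.sin (ang i) : ℂ) * (Real.cos (ang j) : ℂ) -
        (Real.cos (ang i) : ℂ) * (Real.sin (ang j) : ℂ)) * h1
    exact_mod_cast this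
  have hfin : {i | ga (x i * g) = 0}.Finite := by
    refine Set.Subsingleton.finite fun i hi j hj => hcross i j ?_
    simp only [Set.mem_setOf_eq] at hi hj
    rw [hi, hj]; ring
  have hinf := hg.diff hfin
  have himg := hinf.image (f := fun i => conj (gb (x i * g)) / ga (x i * g)) (by
    intro i hi j hj hij
    refine hcross i j ?_
    have hi' : ga (x i * g) ≠ 0 := hi.2
    have hj' : ga (x j * g) ≠ 0 := hj.2
    simp only at hij
    rw [div_eq_div_iff hi' hj'] at hij
    rw [hij, sub_self])
  refine hv (PV_zero_of_infinite v _ himg ?_)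
  rintro _ ⟨i, hi, rfl⟩
  exact hdiv _ _ hi.2 (hZ _ hi.1)

lemma step1 (μ : Measure SU2) [μ.IsHaarMeasure]
    [IsProbabilityMeasure μ] {n : ℕ} {D : Fin (n + 1) → Fin (n + 1) → SU2 → ℂ}
    (hD : IsWigner n D) (v w : Fin (n + 1) → ℂ) (j : Fin (n + 1)) (hj : w j ≠ 0) :
    μ {g : SU2 | herm (DVec D g v) w = 0} ≤
      μ {g : SU2 | herm (DVec D g v) (Pi.single j 1) = 0} := by
  set a : ℕ → ℂ := fun i => (Real.cos (ang i) : ℂ) + (Real.sin (ang i) : ℂ) * I with ha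
  have hac : ∀ i, conj (a i) = (Real.cos (ang i) : ℂ) - (Real.sin (ang i) : ℂ) * I := by
    intro i
    simp only [ha, map_add, map_mul, conj_ofReal, conj_I]
    ring
  have haa : ∀ i, conj (a i) * a i = 1 := by
    intro i
    rw [hac]
    simp only [ha]
    linear_combination ang_sq i - (Real.sin (ang i) : ℂ) ^ 2 * I_sq
  have hx : ∀ i, ∃ g : SU2, ga g = a i ∧ gb g = 0 := by
    intro i
    refine exists_su2 _ _ ?_
    rw [haa]; simp
  choose x hxa hxb using hx
  refine (le_measure_recur μ _ (measurable_Z hD _ _) x).trans (measure_mono fun g hg => ?_)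
  simp only [Set.mem_setOf_eq] at hg ⊢
  have hDx : ∀ i, DVec D (x i * g) v =
      fun k : Fin (n + 1) => (conj (a i)) ^ (k : ℕ) * (a i) ^ (n - (k : ℕ)) * DVec D g v k := by
    intro i
    rw [DVec_mul hD]
    refine PV_inj _ _ fun z => ?_
    rw [PV_DVec hD, hxa, hxb]
    unfold PV
    refine Finset.sum_congr rfl fun k _ => ?_
    simp [mul_pow]
    ring
  have hinj : Function.Injective fun i => (a i) ^ 2 := by
    intro i k hik
    simp only at hik
    refine ang_cross ?_
    have e : (a i * conj (a k) - conj (a i) * a k) = 0 := by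
      have : conj (a i) * conj (a k) * (a i ^ 2 - a k ^ 2) = 0 := by rw [hik]; ring
      linear_combination this - a i * conj (a k) * haa i + conj (a i) * a k * haa k
    rw [hac, hac] at e
    simp only [ha] at e
    have : (((Real.sin (ang i) * Real.cos (ang k) -
      Real.cos (ang i) * Real.sin (ang k) : ℝ)) : ℂ) * (2 * I) = 0 := by
      simp only [ofReal_sub, ofReal_mul]
      linear_combination e
    have := (mul_eq_zero.1 this).resolve_right (by simp)
    exact_mod_cast this
  clear_value a
  have hz := vec_zero_of_infinite (fun k => conj (DVec D g v k) * w k) _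
    (hg.image (f := fun i => (a i) ^ 2) hinj.injOn) (by
      rintro _ ⟨i, hi, rfl⟩
      have hi' : herm (DVec D (x i * g) v) w = 0 := hi
      rw [hDx] at hi'
      unfold herm at hi'
      have : (a i) ^ n * ∑ r : Fin (n + 1), conj ((conj (a i)) ^ (r : ℕ) * (a i) ^ (n - (r : ℕ)) *
          DVec D g v r) * w r = 0 := by rw [hi', mul_zero]
      rw [← this, Finset.mul_sum]
      refine Finset.sum_congr rfl fun k _ => ?_
      have hk : (k : ℕ) ≤ n := Nat.lt_succ_iff.1 k.2
      have e : a i ^ n = a i ^ (k : ℕ) * a i ^ (n - (k : ℕ)) := by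
        rw [← pow_add, Nat.add_sub_cancel' hk]
      have e2 : conj (a i) ^ (n - (k : ℕ)) * a i ^ (n - (k : ℕ)) = 1 := by
        rw [← mul_pow, haa, one_pow]
      rw [e]
      simp only [map_mul, map_pow, conj_conj]
      linear_combination (-(a i ^ (2 * (k : ℕ))) * conj (DVec D g v k) * w k) * e2)
  have hzj := congrFun hz j
  simp only [Pi.zero_apply, mul_eq_zero, hj, or_false] at hzj
  simp [herm, Pi.single_apply, hzj]

lemma step2 {n : ℕ} {D : Fin (n + 1) → Fin (n + 1) → SU2 → ℂ}
    (hD : IsWigner n D) (j : Fin (n + 1)) : ∃ g, D j 0 g ≠ 0 := by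
  obtain ⟨g, hga, hgb⟩ := exists_su2 (3 / 5) (4 / 5) (by
    simp only [map_div₀, map_ofNat]; norm_num)
  refine ⟨g, ?_⟩
  have : (fun i => D i 0 g) = fun i : Fin (n + 1) => (Real.sqrt (n.choose (i : ℕ)) : ℂ) *
      (-(4 / 5)) ^ (i : ℕ) * (3 / 5) ^ (n - (i : ℕ)) := by
    refine PV_inj _ _ fun z => ?_
    have := hD g 0 z 1
    unfold PV
    rw [this, hga, hgb]
    simp only [Fin.val_zero, pow_zero, Nat.choose_zero_right, Nat.cast_one, Real.sqrt_one,
      ofReal_one, one_mul, Nat.sub_zero, mul_one, one_pow]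
    rw [add_pow, Finset.sum_range]
    refine Finset.sum_congr rfl fun i _ => ?_
    have e : (Real.sqrt (n.choose (i : ℕ)) : ℂ) * (Real.sqrt (n.choose (i : ℕ)) : ℂ) =
        (n.choose (i : ℕ) : ℂ) := by
      rw [← ofReal_mul, Real.mul_self_sqrt (by positivity)]; simp
    rw [← e, mul_pow]
    ring
  rw [show D j 0 g = _ from congrFun this j]
  refine mul_ne_zero (mul_ne_zero (sqrt_choose_ne j) (pow_ne_zero _ ?_)) (pow_ne_zero _ ?_) <;>
    norm_num

end helpers

/-- for nonzero `v, w ∈ ℂ^{2ℓ+1}` the set `{g ∈ SU(2) : ⟨D^ℓ(g)v, w⟩ = 0}` has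
Haar measure zero. -/
theorem wigner_orbit_hyperplane_null (μ : Measure SU2) [μ.IsHaarMeasure]
    [IsProbabilityMeasure μ] (n : ℕ) (D : Fin (n + 1) → Fin (n + 1) → SU2 → ℂ)
    (hD : IsWigner n D) (v w : Fin (n + 1) → ℂ) (hv : v ≠ 0) (hw : w ≠ 0) :
    μ {g : SU2 | herm (DVec D g v) w = 0} = 0 := by
  obtain ⟨j, hj⟩ := Function.ne_iff.1 hw
  obtain ⟨x, hx⟩ := step2 hD j
  refine le_antisymm ?_ zero_le
  refine (step1 μ hD v w j hj).trans ?_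
  rw [← measure_preimage_mul μ x]
  have e : ((fun g => x * g) ⁻¹' {g : SU2 | herm (DVec D g v) (Pi.single j 1) = 0}) =
      {g : SU2 | herm (DVec D g v) (fun k => ∑ i, conj (D i k x) * (Pi.single j 1 : _ → ℂ) i) = 0} := by
    ext g
    simp only [Set.mem_preimage, Set.mem_setOf_eq, herm_mul hD]
  rw [e, ← step3 μ hD v hv]
  refine step1 μ hD v _ 0 ?_
  simpa [Pi.single_apply] using hx
end
end
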